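/- arXiv:2301.03542 — 2 statements merged into one kernel-verified Lean document; each statement's English description precedes it below -/
import Mathlib

section
/- Let {M_t} be a nonnegative adapted process on Ω that is a nonnegative supermartingale simultaneously for every independent-product law in ⨂𝒟 (every law of an independent sequence whose marginals have Lebesgue densities). Then {M_t} is 𝚪-almost surely nonincreasing: 𝚪(∃ t ≥ 1 : M_t > M_{t−1}) = 0. If moreover {M_t} is a nonnegative martingale for every law in ⨂𝒟, then 𝚪(∃ t ≥ 1 : M_t ≠ M_{t−1}) = 0. -/
open MeasureTheory ProbabilityTheory Filter Finset Matrix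
open scoped Classical

noncomputable section

namespace SeqTest

/-- `ℝ^d`. -/
abbrev RV (d : ℕ) := Fin d → ℝ

/-- The sequence space `Ω = (ℝ^d)^ℕ`. -/
abbrev Seq (d : ℕ) := ℕ → RV d

variable (d : ℕ)


/-- The first `t` coordinates of a sequence. -/
def prefixMap (t : ℕ) : Seq d → (Fin t → RV d) := fun ω s => ω s

/-- The law of the first `t` coordinates under a sequential law `μ`. -/
def prefixLaw (μ : Measure (Seq d)) (t : ℕ) : Measure (Fin t → RV d) :=
  μ.map (prefixMap d t)

/-- The natural filtration of the coordinate process: `ℱ t = σ(X_0, …, X_{t-1})`. -/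
def F : Filtration ℕ (inferInstance : MeasurableSpace (Seq d)) where
  seq t := ⨆ s ∈ Finset.range t, MeasurableSpace.comap (fun ω : Seq d => ω s) inferInstance
  mono' := by
    intro i j hij
    exact biSup_mono fun s hs => Finset.mem_range.mpr
      (lt_of_lt_of_le (Finset.mem_range.mp hs) hij)
  le' := by
    intro t
    refine iSup₂_le fun s _ => ?_
    exact measurable_iff_comap_le.mp (measurable_pi_apply s)

/-- Local absolute continuity of sequential laws: every prefix law of `μ` is
absolutely continuous w.r.t. the corresponding prefix law of `Γ`. -/
def LocAC (μ Γ : Measure (Seq d)) : Prop := ∀ t, prefixLaw d μ t ≪ prefixLaw d Γ t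

/-- The density (likelihood-ratio) process `Z_t^μ = d(μ|_t)/d(Γ|_t)` evaluated along the path. -/
def Z (μ Γ : Measure (Seq d)) (t : ℕ) (ω : Seq d) : ℝ :=
  ((prefixLaw d μ t).rnDeriv (prefixLaw d Γ t) (prefixMap d t ω)).toReal

/-- The standard Gaussian measure on `ℝ^d`. -/
def stdGaussian : Measure (RV d) := Measure.pi fun _ => gaussianReal 0 1

/-- `Γ` is the law of an i.i.d. sequence of standard Gaussians: characterized through its
finite-dimensional rectangle probabilities. -/
def IsGamma (Γ : Measure (Seq d)) : Prop :=
  IsProbabilityMeasure Γ ∧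
    ∀ (t : ℕ) (A : Fin t → Set (RV d)), (∀ s, MeasurableSet (A s)) →
      prefixLaw d Γ t (Set.univ.pi A) = ∏ s, stdGaussian d (A s)

/-- `M` is a nonnegative supermartingale for the sequential law `μ`
(w.r.t. the natural filtration). -/
def IsNSM (μ : Measure (Seq d)) (M : ℕ → Seq d → ℝ) : Prop :=
  (∀ t ω, 0 ≤ M t ω) ∧ Supermartingale M (F d) μ

/-- `M` is a nonnegative martingale for the sequential law `μ`. -/
def IsNM (μ : Measure (Seq d)) (M : ℕ → Seq d → ℝ) : Prop :=
  (∀ t ω, 0 ≤ M t ω) ∧ Martingale M (F d) μ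


/-- `R` is the `(s,h)`-fork-convex combination of `P` with `Q` (relative to the
reference law `Γ`), described through its density process. -/
def IsFCC (Γ P Q : Measure (Seq d)) (s : ℕ) (h : Seq d → ℝ) (R : Measure (Seq d)) : Prop :=
  IsProbabilityMeasure P ∧ IsProbabilityMeasure Q ∧ LocAC d P Γ ∧ LocAC d Q Γ ∧
  Measurable[F d s] h ∧ (∀ ω, h ω ∈ Set.Icc (0 : ℝ) 1) ∧
  Γ {ω | h ω < 1 ∧ Z d Q Γ s ω = 0} = 0 ∧
  IsProbabilityMeasure R ∧ LocAC d R Γ ∧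
  ∀ t : ℕ, (fun ω => Z d R Γ t ω) =ᵐ[Γ]
    (fun ω => if t ≤ s then Z d P Γ t ω
      else h ω * Z d P Γ t ω + (1 - h ω) * Z d Q Γ t ω * (Z d P Γ s ω / Z d Q Γ s ω))

/-- A set of sequential laws is fork-convex if it is closed under fork-convex combinations. -/
def IsForkConvex (Γ : Measure (Seq d)) (S : Set (Measure (Seq d))) : Prop :=
  ∀ P ∈ S, ∀ Q ∈ S, ∀ (s : ℕ) (h : Seq d → ℝ) (R : Measure (Seq d)),
    IsFCC d Γ P Q s h R → R ∈ S

/-- The fork-convex hull: the smallest fork-convex set containing `𝔓`. -/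
def fconv (Γ : Measure (Seq d)) (𝔓 : Set (Measure (Seq d))) : Set (Measure (Seq d)) :=
  ⋂₀ {S | 𝔓 ⊆ S ∧ IsForkConvex d Γ S}

/-- Convergence of sequential laws: the density processes converge in `L¹(Γ)` at every fixed time. -/
def TendstoLocL1 (Γ : Measure (Seq d)) (Pn : ℕ → Measure (Seq d)) (P : Measure (Seq d)) : Prop :=
  ∀ t, Tendsto (fun n => ∫ ω, |Z d (Pn n) Γ t ω - Z d P Γ t ω| ∂Γ) atTop (nhds 0)

/-- The closed fork-convex hull: the closure of the fork-convex hull under local `L¹(Γ)`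
convergence of density processes. -/
def clfconv (Γ : Measure (Seq d)) (𝔓 : Set (Measure (Seq d))) : Set (Measure (Seq d)) :=
  {P | IsProbabilityMeasure P ∧ LocAC d P Γ ∧
    ∃ Pn : ℕ → Measure (Seq d), (∀ n, Pn n ∈ fconv d Γ 𝔓) ∧ TendstoLocL1 d Γ Pn P}

/-- `μ` is the law of an i.i.d. sequence with marginal `P`. -/
def IsIIDLaw (μ : Measure (Seq d)) (P : Measure (RV d)) : Prop :=
  IsProbabilityMeasure μ ∧
    ∀ (t : ℕ) (A : Fin t → Set (RV d)), (∀ s, MeasurableSet (A s)) →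
      prefixLaw d μ t (Set.univ.pi A) = ∏ s, P (A s)

/-- `μ` is the law of an independent sequence with marginals `Ps 0, Ps 1, …`. -/
def IsProductLaw (μ : Measure (Seq d)) (Ps : ℕ → Measure (RV d)) : Prop :=
  IsProbabilityMeasure μ ∧
    ∀ (t : ℕ) (A : Fin t → Set (RV d)), (∀ s, MeasurableSet (A s)) →
      prefixLaw d μ t (Set.univ.pi A) = ∏ s : Fin t, Ps s (A s)

/-- The set of i.i.d. sequential laws with marginals in `PP`. -/
def iidLaws (PP : Set (Measure (RV d))) : Set (Measure (Seq d)) :=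
  {μ | ∃ P ∈ PP, IsIIDLaw d μ P}

/-- The set of independent-product sequential laws with all marginals in `PP`. -/
def productLaws (PP : Set (Measure (RV d))) : Set (Measure (Seq d)) :=
  {μ | ∃ Ps : ℕ → Measure (RV d), (∀ t, Ps t ∈ PP) ∧ IsProductLaw d μ Ps}




/-- The density of the `d`-dimensional Gaussian with mean `m` and covariance matrix `S`. -/
def gaussDensityFn (m : RV d) (S : Matrix (Fin d) (Fin d) ℝ) (x : RV d) : ℝ :=
  (2 * Real.pi) ^ (-(d : ℝ) / 2) * S.det ^ (-(1 : ℝ) / 2) *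
    Real.exp (-(1 / 2) * ((x - m) ⬝ᵥ (S⁻¹ *ᵥ (x - m))))

/-- A finite mixture of nondegenerate Gaussian densities. -/
def IsGaussianMixture (g : RV d → ℝ) : Prop :=
  ∃ (k : ℕ) (α : Fin k → ℝ) (ms : Fin k → RV d) (Ss : Fin k → Matrix (Fin d) (Fin d) ℝ),
    (∀ i, 0 ≤ α i) ∧ (∑ i, α i = 1) ∧ (∀ i, (Ss i).PosDef) ∧
    g = fun x => ∑ i, α i * gaussDensityFn d (ms i) (Ss i) x

/-- A log-concave nonnegative function on `ℝ^d`. -/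
def IsLogConcaveFn (p : RV d → ℝ) : Prop :=
  (∀ x, 0 ≤ p x) ∧
    ∀ (x y : RV d) (l : ℝ), 0 ≤ l → l ≤ 1 →
      p x ^ l * p y ^ (1 - l) ≤ p (l • x + (1 - l) • y)

/-- A log-concave probability density on `ℝ^d`. -/
def IsLogConcaveDensity (p : RV d → ℝ) : Prop :=
  Measurable p ∧ IsLogConcaveFn d p ∧ ∫ x, p x = 1

/-- The set `𝓛` of laws on `ℝ^d` with a log-concave Lebesgue density. -/
def logConcaveLaws : Set (Measure (RV d)) :=
  {P | IsProbabilityMeasure P ∧ ∃ p : RV d → ℝ, Measurable p ∧ IsLogConcaveFn d p ∧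
    P = volume.withDensity fun x => ENNReal.ofReal (p x)}

/-- The set `𝒢` of nondegenerate Gaussian laws on `ℝ^d`. -/
def gaussianLaws : Set (Measure (RV d)) :=
  {P | ∃ (m : RV d) (S : Matrix (Fin d) (Fin d) ℝ), S.PosDef ∧
    P = volume.withDensity fun x => ENNReal.ofReal (gaussDensityFn d m S x)}

/-- An estimator sequence: a measurable family of (strictly positive) predictable
probability density estimates. -/
def IsEstimatorSeq (E : (t : ℕ) → (Fin t → RV d) → RV d → ℝ) : Prop :=
  (∀ t, Measurable fun q : (Fin t → RV d) × RV d => E t q.1 q.2) ∧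
  (∀ t h x, 0 < E t h x) ∧ (∀ t h, ∫ x, E t h x = 1)

/-- The universal likelihood ratio (ULR) process. Time `t` corresponds to having observed
the `t` samples `ω 0, …, ω (t-1)`. -/
def ULR (E : (t : ℕ) → (Fin t → RV d) → RV d → ℝ) (t : ℕ) (ω : Seq d) : ℝ :=
  if t ≤ d then 1 else
    (∏ j ∈ Finset.Ico d t, E j (fun i : Fin j => ω i) (ω j)) /
      ⨆ p : {p : RV d → ℝ // IsLogConcaveDensity d p}, ∏ j ∈ Finset.Ico d t, p.1 (ω j)

/-- The prediction (cumulative log-loss) regret of the estimator sequence `E` relative to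
the density of `P`. -/
def regret (P : Measure (RV d)) (E : (t : ℕ) → (Fin t → RV d) → RV d → ℝ)
    (t : ℕ) (ω : Seq d) : ℝ :=
  ∑ j ∈ Finset.range t,
    (Real.log ((P.rnDeriv volume (ω j)).toReal) - Real.log (E j (fun i : Fin j => ω i) (ω j)))

/-- The Hellinger distance between two laws on `ℝ^d` (via their Lebesgue densities). -/
def hellinger (P Q : Measure (RV d)) : ℝ :=
  Real.sqrt ((1 / 2) *
    ∫ x, (Real.sqrt ((P.rnDeriv volume x).toReal) - Real.sqrt ((Q.rnDeriv volume x).toReal)) ^ 2)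

/-- The Hellinger distance from `P` to the class of log-concave laws. -/
def dHLC (P : Measure (RV d)) : ℝ :=
  sInf {r | ∃ L ∈ logConcaveLaws d, r = hellinger d P L}

/-- The Kullback–Leibler divergence. -/
def klDivR {α : Type*} [MeasurableSpace α] (P Q : Measure α) : EReal :=
  if P ≪ Q ∧ Integrable (fun x => Real.log ((P.rnDeriv Q x).toReal)) P
  then ((∫ x, Real.log ((P.rnDeriv Q x).toReal) ∂P : ℝ) : EReal) else ⊤

/-- Membership in `𝒟₁`. -/
def MemD1 (P : Measure (RV d)) : Prop :=
  IsProbabilityMeasure P ∧ P ≪ volume ∧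
  Integrable (fun x => max 0 (Real.log ((P.rnDeriv volume x).toReal))) P ∧
  Integrable (fun x => Real.sqrt (∑ i, (x i) ^ 2)) P

/-- The log-likelihood gap `σ_t(P)` between the true density and the log-concave maximum
likelihood. -/
def sigmaT (P : Measure (RV d)) (t : ℕ) (ω : Seq d) : ℝ :=
  (∑ j ∈ Finset.range t, Real.log ((P.rnDeriv volume (ω j)).toReal)) -
    ⨆ p : {p : RV d → ℝ // IsLogConcaveDensity d p},
      ∑ j ∈ Finset.range t, Real.log (p.1 (ω j))

/-- The mean vector of `P`. -/
def meanVec (P : Measure (RV d)) : RV d := fun i => ∫ x, x i ∂P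

/-- `Δ_P = min_{‖v‖=1} E_P |⟨v, X − E_P X⟩|`. -/
def DeltaP (P : Measure (RV d)) : ℝ :=
  sInf {r | ∃ v : RV d, (∑ i, (v i) ^ 2) = 1 ∧
    r = ∫ x, |∑ i, v i * (x i - meanVec d P i)| ∂P}

/-- The class `𝒟_{Box,Lip,B}`: laws with a `1`-Lipschitz density supported on `[-1,1]^d`
taking values in `[1/B, B]` there. -/
def DBoxLip (B : ℝ) : Set (Measure (RV d)) :=
  {P | IsProbabilityMeasure P ∧ ∃ p : RV d → ℝ, Measurable p ∧
    P = volume.withDensity (fun x => ENNReal.ofReal (p x)) ∧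
    (∀ x, ¬ (∀ i, |x i| ≤ 1) → p x = 0) ∧
    (∀ x, (∀ i, |x i| ≤ 1) → 1 / B ≤ p x ∧ p x ≤ B) ∧
    (∀ x y, (∀ i, |x i| ≤ 1) → (∀ i, |y i| ≤ 1) →
      |p x - p y| ≤ Real.sqrt (∑ i, (x i - y i) ^ 2))}

/-- A measure inequality between finite measures extends from a generating algebra of sets. -/
theorem measure_le_of_generateFrom_isSetAlgebra {α : Type*} [m0 : MeasurableSpace α]
    {𝒜 : Set (Set α)} (h𝒜 : IsSetAlgebra 𝒜) (hgen : m0 = MeasurableSpace.generateFrom 𝒜)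
    (ν₁ ν₂ : Measure α) [IsFiniteMeasure ν₁] [IsFiniteMeasure ν₂]
    (h : ∀ s ∈ 𝒜, ν₁ s ≤ ν₂ s) : ν₁ ≤ ν₂ := by
  refine Measure.le_iff.2 fun s hs => ENNReal.le_of_forall_pos_le_add fun ε hε _ => ?_
  obtain ⟨t, ht, hst⟩ :=
    (Measure.MeasureDense.of_generateFrom_isSetAlgebra_finite (ν₁ + ν₂) h𝒜 hgen).approx
      s hs (measure_ne_top _ _) ε hε
  have hsub : s ⊆ t ∪ symmDiff s t := by
    intro x hx
    by_cases hxt : x ∈ t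
    · exact Or.inl hxt
    · exact Or.inr (Or.inl ⟨hx, hxt⟩)
  have hsub' : t ⊆ s ∪ symmDiff s t := by
    intro x hx
    by_cases hxs : x ∈ s
    · exact Or.inl hxs
    · exact Or.inr (Or.inr ⟨hx, hxs⟩)
  rw [ENNReal.ofReal_coe_nnreal, Measure.add_apply] at hst
  calc ν₁ s ≤ ν₁ t + ν₁ (symmDiff s t) := (measure_mono hsub).trans (measure_union_le _ _)
    _ ≤ ν₂ t + ν₁ (symmDiff s t) := add_le_add_left (h t ht) _
    _ ≤ ν₂ s + ν₂ (symmDiff s t) + ν₁ (symmDiff s t) := by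
        gcongr; exact (measure_mono hsub').trans (measure_union_le _ _)
    _ = ν₂ s + (ν₁ (symmDiff s t) + ν₂ (symmDiff s t)) := by ring
    _ ≤ ν₂ s + ε := by gcongr

/-- The sets obtained by choosing an `m`-measurable set according to the value of a countable
measurable classification of `X`. -/
def classifiedSets {α E : Type*} (m : MeasurableSpace α) [MeasurableSpace E] (X : α → E) :
    Set (Set α) :=
  {S | ∃ f : E → ℕ, Measurable f ∧ ∃ A : ℕ → Set α, (∀ i, MeasurableSet[m] (A i)) ∧
    S = {ω | ω ∈ A (f (X ω))}}

theorem isSetAlgebra_classifiedSets {α E : Type*} (m : MeasurableSpace α) [MeasurableSpace E]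
    (X : α → E) : IsSetAlgebra (classifiedSets m X) where
  empty_mem := ⟨fun _ => 0, measurable_const, fun _ => ∅, fun _ => MeasurableSet.empty, rfl⟩
  compl_mem := by
    rintro _ ⟨f, hf, A, hA, rfl⟩
    exact ⟨f, hf, fun i => (A i)ᶜ, fun i => (hA i).compl, rfl⟩
  union_mem := by
    rintro _ _ ⟨f, hf, A, hA, rfl⟩ ⟨g, hg, B, hB, rfl⟩
    refine ⟨fun x => Nat.pair (f x) (g x), ?_,
      fun k => A k.unpair.1 ∪ B k.unpair.2, fun k => (hA _).union (hB _), ?_⟩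
    · exact (Measurable.of_discrete (f := fun p : ℕ × ℕ => Nat.pair p.1 p.2)).comp (hf.prodMk hg)
    · ext ω
      simp

theorem classifiedSet_eq_iUnion {α E : Type*} (X : α → E) (f : E → ℕ) (A : ℕ → Set α) :
    {ω | ω ∈ A (f (X ω))} = ⋃ i, A i ∩ X ⁻¹' (f ⁻¹' {i}) := by
  ext ω
  simp

theorem sup_comap_eq_generateFrom_classifiedSets {α E : Type*} (m : MeasurableSpace α)
    [mE : MeasurableSpace E] (X : α → E) :
    m ⊔ mE.comap X = MeasurableSpace.generateFrom (classifiedSets m X) := by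
  apply le_antisymm
  · refine sup_le (fun A hA => ?_) ?_
    · exact MeasurableSpace.measurableSet_generateFrom
        ⟨fun _ => 0, measurable_const, fun _ => A, fun _ => hA, rfl⟩
    · rintro _ ⟨B, hB, rfl⟩
      refine MeasurableSpace.measurableSet_generateFrom
        ⟨B.indicator fun _ => 1, measurable_const.indicator hB,
          fun i => if i = 1 then Set.univ else ∅, fun i => ?_, ?_⟩
      · dsimp only
        split_ifs
        · exact MeasurableSet.univ
        · exact MeasurableSet.empty
      · ext ω
        by_cases h : X ω ∈ B <;> simp [h]
  · refine MeasurableSpace.generateFrom_le ?_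
    rintro _ ⟨f, hf, A, hA, rfl⟩
    rw [classifiedSet_eq_iUnion]
    refine MeasurableSet.iUnion fun i => ?_
    refine MeasurableSet.inter (m := m ⊔ mE.comap X) ?_ ?_
    · exact le_sup_left (a := m) (b := mE.comap X) _ (hA i)
    · exact le_sup_right (a := m) (b := mE.comap X) _
        ⟨_, hf (measurableSet_singleton i), rfl⟩

/-- A measure inequality extends from the rectangles `A ∩ X ⁻¹' B`, with `A` in `m`, to the
sigma-algebra generated by `m` and `X`. -/
theorem measure_le_of_le_on_rectangles {α E : Type*} {m : MeasurableSpace α}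
    [m0 : MeasurableSpace α] [mE : MeasurableSpace E] (hm : m ≤ m0) {X : α → E}
    (hX : Measurable X) (ν₁ ν₂ : Measure α) [IsFiniteMeasure ν₁] [IsFiniteMeasure ν₂]
    (h : ∀ A, MeasurableSet[m] A → ∀ B, MeasurableSet B → ν₁ (A ∩ X ⁻¹' B) ≤ ν₂ (A ∩ X ⁻¹' B))
    {S : Set α} (hS : MeasurableSet[m ⊔ mE.comap X] S) : ν₁ S ≤ ν₂ S := by
  have hle : m ⊔ mE.comap X ≤ m0 := sup_le hm hX.comap_le
  rw [← trim_measurableSet_eq hle hS, ← trim_measurableSet_eq hle hS]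
  refine measure_le_of_generateFrom_isSetAlgebra (m0 := m ⊔ mE.comap X)
    (isSetAlgebra_classifiedSets m X)
    (sup_comap_eq_generateFrom_classifiedSets m X) (ν₁.trim hle) (ν₂.trim hle) ?_ S
  intro s hs
  have hs' : MeasurableSet[m ⊔ mE.comap X] s := by
    rw [sup_comap_eq_generateFrom_classifiedSets]
    exact MeasurableSpace.measurableSet_generateFrom hs
  rw [trim_measurableSet_eq hle hs', trim_measurableSet_eq hle hs']
  obtain ⟨f, hf, A, hA, rfl⟩ := hs
  have hmeas : ∀ i, MeasurableSet (A i ∩ X ⁻¹' (f ⁻¹' {i})) := fun i =>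
    (hm _ (hA i)).inter (hX (hf (measurableSet_singleton i)))
  have hdisj : Pairwise (Function.onFun Disjoint fun i => A i ∩ X ⁻¹' (f ⁻¹' {i})) := by
    intro i j hij
    refine Set.disjoint_left.2 fun ω hi hj => hij ?_
    exact hi.2.symm.trans hj.2
  rw [classifiedSet_eq_iUnion, measure_iUnion hdisj hmeas, measure_iUnion hdisj hmeas]
  exact ENNReal.tsum_le_tsum fun i => h _ (hA i) _ (hf (measurableSet_singleton i))

theorem pi_absolutelyContinuous {E : Type*} [MeasurableSpace E] {μ ν : Measure E}
    [SigmaFinite μ] [SigmaFinite ν] (h : μ ≪ ν) (n : ℕ) :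
    Measure.pi (fun _ : Fin n => μ) ≪ Measure.pi (fun _ : Fin n => ν) := by
  induction n with
  | zero =>
    rw [Measure.pi_of_empty, Measure.pi_of_empty]
  | succ n ih =>
    have hμ := (measurePreserving_piFinSuccAbove (fun _ : Fin (n + 1) => μ) 0).symm
    have hν := (measurePreserving_piFinSuccAbove (fun _ : Fin (n + 1) => ν) 0).symm
    rw [← hμ.map_eq, ← hν.map_eq]
    exact (h.prod ih).map hμ.measurable

instance : IsProbabilityMeasure (stdGaussian d) := by
  unfold stdGaussian; infer_instance

theorem stdGaussian_absolutelyContinuous : stdGaussian d ≪ (volume : Measure (RV d)) :=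
  pi_absolutelyContinuous (gaussianReal_absolutelyContinuous 0 one_ne_zero) d

variable {d}

theorem prefixMap_preimage_pi (n : ℕ) (A : ℕ → Set (RV d)) :
    prefixMap d n ⁻¹' Set.univ.pi (fun s => A s) = {ω | ∀ s < n, ω s ∈ A s} := by
  ext ω
  simp only [prefixMap, Set.mem_preimage, Set.mem_pi, Set.mem_univ, true_imp_iff]
  exact ⟨fun h s hs => h ⟨s, hs⟩, fun h s => h s s.2⟩

theorem measurable_prefixMap (n : ℕ) : Measurable (prefixMap d n) :=
  measurable_pi_lambda _ fun s => measurable_pi_apply (s : ℕ)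

theorem IsProductLaw.measure_forall_lt {μ : Measure (Seq d)} {Ps : ℕ → Measure (RV d)}
    (h : IsProductLaw d μ Ps) (n : ℕ) (A : ℕ → Set (RV d)) (hA : ∀ s, MeasurableSet (A s)) :
    μ {ω | ∀ s < n, ω s ∈ A s} = ∏ s ∈ range n, Ps s (A s) := by
  have := h.2 n (fun s => A s) fun s => hA s
  rw [prefixLaw, Measure.map_apply (measurable_prefixMap n)
    (MeasurableSet.univ_pi fun s => hA s), prefixMap_preimage_pi] at this
  rw [this, Finset.prod_range]

theorem IsProductLaw.measure_eval {μ : Measure (Seq d)} {Ps : ℕ → Measure (RV d)}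
    (h : IsProductLaw d μ Ps) (hP : ∀ s, IsProbabilityMeasure (Ps s)) (t : ℕ) {B : Set (RV d)}
    (hB : MeasurableSet B) : μ {ω | ω t ∈ B} = Ps t B := by
  have := h.measure_forall_lt (t + 1) (fun s => if s = t then B else Set.univ)
    fun s => by split_ifs <;> simp [hB]
  convert this using 1
  · congr 1
    ext ω
    simp only [Set.mem_ofPred_eq]
    refine ⟨fun hω s _ => ?_, fun hω => by simpa using hω t (Nat.lt_succ_self t)⟩
    split_ifs with hs
    · rwa [hs]
    · trivial
  · rw [Finset.prod_eq_single t]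
    · simp
    · intro s _ hs
      simp [hs]
    · simp

/-- Conditioning a product law on the value of one coordinate conditions that marginal. -/
theorem IsProductLaw.cond {μ : Measure (Seq d)} {Ps : ℕ → Measure (RV d)}
    (h : IsProductLaw d μ Ps) (hP : ∀ s, IsProbabilityMeasure (Ps s)) (t : ℕ) {B : Set (RV d)}
    (hB : MeasurableSet B) (hB0 : Ps t B ≠ 0) :
    IsProductLaw d (μ[|{ω | ω t ∈ B}]) (Function.update Ps t ((Ps t)[|B])) := by
  have hμ := h.1
  have hC : MeasurableSet {ω : Seq d | ω t ∈ B} := measurable_pi_apply t hB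
  have hCB := h.measure_eval hP t hB
  have hQ : ∀ s, IsProbabilityMeasure (Function.update Ps t ((Ps t)[|B]) s) := by
    intro s
    by_cases hs : s = t
    · subst hs
      rw [Function.update_self]
      exact cond_isProbabilityMeasure hB0
    · rw [Function.update_of_ne hs]
      exact hP s
  refine ⟨cond_isProbabilityMeasure (by rwa [hCB]), fun n A₀ hA₀ => ?_⟩
  set A : ℕ → Set (RV d) := fun s => if hs : s < n then A₀ ⟨s, hs⟩ else Set.univ with hAdef
  have hA : ∀ s, MeasurableSet (A s) := by
    intro s
    by_cases hs : s < n
    · simpa [hAdef, hs] using hA₀ _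
    · simp [hAdef, hs]
  have hA₀A : A₀ = fun s : Fin n => A s := by
    funext s
    simp [hAdef]
  rw [hA₀A, prefixLaw, Measure.map_apply (measurable_prefixMap n)
    (MeasurableSet.univ_pi fun s => hA s), prefixMap_preimage_pi, cond_apply hC, hCB,
    ← Finset.prod_range fun s => Function.update Ps t ((Ps t)[|B]) s (A s)]
  set N := max n (t + 1)
  have hset : {ω : Seq d | ω t ∈ B} ∩ {ω | ∀ s < n, ω s ∈ A s} =
      {ω | ∀ s < N, ω s ∈ (if s = t then B ∩ A s else A s)} := by
    ext ω
    simp only [Set.mem_inter_iff, Set.mem_ofPred_eq]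
    constructor
    · rintro ⟨h1, h2⟩ s -
      have hs : ω s ∈ A s := by
        by_cases hs : s < n
        · exact h2 s hs
        · simp [hAdef, hs]
      split_ifs with hst
      · subst hst
        exact ⟨h1, hs⟩
      · exact hs
    · intro hω
      refine ⟨?_, fun s hs => ?_⟩
      · have := hω t (by omega)
        rw [if_pos rfl] at this
        exact this.1
      · have := hω s (by omega)
        split_ifs at this
        · exact this.2
        · exact this
  have hmeas : ∀ s, MeasurableSet (if s = t then B ∩ A s else A s) := by
    intro s
    split_ifs
    · exact hB.inter (hA s)
    · exact hA s
  have htN : t ∈ range N := Finset.mem_range.2 (by omega)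
  have hext : ∏ s ∈ range n, Function.update Ps t ((Ps t)[|B]) s (A s) =
      ∏ s ∈ range N, Function.update Ps t ((Ps t)[|B]) s (A s) := by
    refine Finset.prod_subset (Finset.range_mono (le_max_left _ _)) fun s _ hs => ?_
    have hsn : ¬ s < n := by simpa using hs
    simp only [hAdef, hsn, dite_false]
    exact (hQ s).measure_univ
  rw [hset, h.measure_forall_lt N _ hmeas, hext, ← Finset.mul_prod_erase _ _ htN,
    ← Finset.mul_prod_erase (range N) _ htN, ← mul_assoc, if_pos rfl, Function.update_self,
    cond_apply hB]
  congr 1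
  refine Finset.prod_congr rfl fun s hs => ?_
  have hst := Finset.ne_of_mem_erase hs
  rw [if_neg hst, Function.update_of_ne hst]

theorem F_succ (t : ℕ) :
    (F d (t + 1) : MeasurableSpace (Seq d)) =
      F d t ⊔ MeasurableSpace.comap (fun ω : Seq d => ω t) inferInstance := by
  change (⨆ s ∈ range (t + 1), _) = (⨆ s ∈ range t, _) ⊔ _
  simp only [Finset.mem_range, Nat.lt_succ_iff_lt_or_eq, iSup_or, iSup_sup_eq, iSup_iSup_eq_left]

/-- `M` is a supermartingale for all product laws with absolutely continuous marginals. -/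
def IsUniversalNSM (M : ℕ → Seq d → ℝ) : Prop :=
  ∀ μ : Measure (Seq d), (∃ Ps : ℕ → Measure (RV d),
    (∀ t, IsProbabilityMeasure (Ps t) ∧ Ps t ≪ (volume : Measure (RV d))) ∧
    IsProductLaw d μ Ps) → IsNSM d μ M

theorem IsUniversalNSM.setIntegral_rectangle_le {M : ℕ → Seq d → ℝ} (hM : IsUniversalNSM M)
    {μ : Measure (Seq d)} {Ps : ℕ → Measure (RV d)}
    (hP : ∀ t, IsProbabilityMeasure (Ps t) ∧ Ps t ≪ (volume : Measure (RV d)))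
    (hμ : IsProductLaw d μ Ps) (t : ℕ) {A : Set (Seq d)} (hA : MeasurableSet[F d t] A)
    {B : Set (RV d)} (hB : MeasurableSet B) :
    ∫ ω in A ∩ {ω | ω t ∈ B}, M (t + 1) ω ∂μ ≤ ∫ ω in A ∩ {ω | ω t ∈ B}, M t ω ∂μ := by
  have := hμ.1
  have hC := hμ.measure_eval (fun s => (hP s).1) t hB
  by_cases hB0 : Ps t B = 0
  · have h0 : μ (A ∩ {ω | ω t ∈ B}) = 0 :=
      measure_mono_null Set.inter_subset_right (hC.trans hB0)
    rw [setIntegral_measure_zero _ h0, setIntegral_measure_zero _ h0]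
  · have hcond := hμ.cond (fun s => (hP s).1) t hB hB0
    have := hcond.1
    have hsuper := (hM _ ⟨_, fun s => ?_, hcond⟩).2.setIntegral_le t.le_succ hA
    · rw [ProbabilityTheory.cond, Measure.restrict_smul,
        Measure.restrict_restrict ((F d).le t _ hA), integral_smul_measure,
        integral_smul_measure] at hsuper
      refine le_of_smul_le_smul_left hsuper (ENNReal.toReal_pos ?_ ?_)
      · simp
      · simpa [hC] using hB0
    · by_cases hs : s = t
      · subst hs
        have := (hP s).1
        rw [Function.update_self]
        exact ⟨cond_isProbabilityMeasure hB0, cond_absolutelyContinuous.trans (hP s).2⟩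
      · rw [Function.update_of_ne hs]
        exact hP s

theorem IsUniversalNSM.ae_succ_le {M : ℕ → Seq d → ℝ} (hM : IsUniversalNSM M)
    {μ : Measure (Seq d)} {Ps : ℕ → Measure (RV d)}
    (hP : ∀ t, IsProbabilityMeasure (Ps t) ∧ Ps t ≪ (volume : Measure (RV d)))
    (hμ : IsProductLaw d μ Ps) (t : ℕ) : ∀ᵐ ω ∂μ, M (t + 1) ω ≤ M t ω := by
  obtain ⟨hpos, hsm⟩ := hM μ ⟨Ps, hP, hμ⟩
  have hprob := hμ.1
  have hint := hsm.integrable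
  have hfin : ∀ s, IsFiniteMeasure (μ.withDensity fun ω => ENNReal.ofReal (M s ω)) :=
    fun s => isFiniteMeasure_withDensity_ofReal (hint s).2
  have hden : ∀ s, ∀ S, MeasurableSet S →
      (μ.withDensity fun ω => ENNReal.ofReal (M s ω)) S =
        ENNReal.ofReal (∫ ω in S, M s ω ∂μ) := by
    intro s S hS
    rw [withDensity_apply _ hS, ofReal_integral_eq_lintegral_ofReal (hint s).integrableOn
      (Eventually.of_forall (hpos s))]
  have hF := F_succ (d := d) t
  have hFle : (F d t : MeasurableSpace (Seq d)) ≤ MeasurableSpace.pi := (F d).le t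
  have hS : MeasurableSet[F d (t + 1)] {ω | M t ω < M (t + 1) ω} :=
    measurableSet_lt
      ((hsm.stronglyAdapted t).measurable.mono ((F d).mono t.le_succ) le_rfl)
      (hsm.stronglyAdapted (t + 1)).measurable
  have hS0 := (F d).le _ _ hS
  have hfin₁ := hfin (t + 1)
  have hfin₂ := hfin t
  have key := measure_le_of_le_on_rectangles (X := fun ω : Seq d => ω t) hFle
    (measurable_pi_apply t)
    (μ.withDensity fun ω => ENNReal.ofReal (M (t + 1) ω))
    (μ.withDensity fun ω => ENNReal.ofReal (M t ω)) (fun A hA B hB => by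
      have hAB : MeasurableSet (A ∩ {ω : Seq d | ω t ∈ B}) :=
        ((F d).le t _ hA).inter (measurable_pi_apply t hB)
      rw [show (fun ω : Seq d => ω t) ⁻¹' B = {ω | ω t ∈ B} from rfl,
        hden _ _ hAB, hden _ _ hAB]
      exact ENNReal.ofReal_le_ofReal (hM.setIntegral_rectangle_le hP hμ t hA hB))
    (hF ▸ hS)
  rw [hden _ _ hS0, hden _ _ hS0, ENNReal.ofReal_le_ofReal_iff
    (integral_nonneg (hpos t))] at key
  have hzero : μ {ω | M t ω < M (t + 1) ω} = 0 := by
    by_contra hne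
    have hlt : 0 < ∫ ω in {ω | M t ω < M (t + 1) ω}, (M (t + 1) ω - M t ω) ∂μ := by
      rw [setIntegral_pos_iff_support_of_nonneg_ae
        ((ae_restrict_iff' hS0).2 (Eventually.of_forall fun ω hω => (sub_pos.2 hω).le))
        ((hint (t + 1)).sub (hint t)).integrableOn]
      refine (pos_iff_ne_zero.2 hne).trans_le (measure_mono fun ω hω => ⟨?_, hω⟩)
      exact (sub_pos.2 hω).ne'
    rw [integral_sub (hint (t + 1)).integrableOn (hint t).integrableOn] at hlt
    linarith
  rw [ae_iff]
  simpa only [not_le] using hzero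

variable (d)

/-- A process that is an NSM for every independent-product law with
Lebesgue-density marginals is `Γ`-a.s. nonincreasing; if it is an NM for all such laws,
it is `Γ`-a.s. constant. -/
theorem statement10 (Γ : Measure (Seq d)) (hΓ : IsGamma d Γ) (M : ℕ → Seq d → ℝ) :
    ((∀ μ : Measure (Seq d), (∃ Ps : ℕ → Measure (RV d),
        (∀ t, IsProbabilityMeasure (Ps t) ∧ Ps t ≪ (volume : Measure (RV d))) ∧
        IsProductLaw d μ Ps) → IsNSM d μ M) →
      Γ {ω | ∃ t : ℕ, 1 ≤ t ∧ M (t - 1) ω < M t ω} = 0) ∧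
    ((∀ μ : Measure (Seq d), (∃ Ps : ℕ → Measure (RV d),
        (∀ t, IsProbabilityMeasure (Ps t) ∧ Ps t ≪ (volume : Measure (RV d))) ∧
        IsProductLaw d μ Ps) → IsNM d μ M) →
      Γ {ω | ∃ t : ℕ, 1 ≤ t ∧ M t ω ≠ M (t - 1) ω} = 0) := by
  have hP : ∀ _ : ℕ, IsProbabilityMeasure (stdGaussian d) ∧
      stdGaussian d ≪ (volume : Measure (RV d)) :=
    fun _ => ⟨inferInstance, stdGaussian_absolutelyContinuous d⟩
  have hprod : IsProductLaw d Γ fun _ => stdGaussian d := hΓ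
  constructor
  · intro hM
    have hle := ae_all_iff.2 fun t => IsUniversalNSM.ae_succ_le hM hP hprod t
    refine measure_mono_null ?_ hle
    rintro ω ⟨t, ht, hlt⟩ hω
    obtain ⟨s, rfl⟩ : ∃ s, t = s + 1 := ⟨t - 1, by omega⟩
    exact (hω s).not_gt hlt
  · intro hM
    have hsuper : IsUniversalNSM M := fun μ hμ => ⟨(hM μ hμ).1, (hM μ hμ).2.supermartingale⟩
    have hmart := (hM Γ ⟨_, hP, hprod⟩).2
    have := hΓ.1
    have heq : ∀ t, ∀ᵐ ω ∂Γ, M t ω = M (t + 1) ω := by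
      intro t
      have hint := (hmart.integrable t).sub (hmart.integrable (t + 1))
      have hnn : 0 ≤ᵐ[Γ] M t - M (t + 1) := by
        filter_upwards [hsuper.ae_succ_le hP hprod t] with ω hω using sub_nonneg.2 hω
      have hz : ∫ ω, (M t - M (t + 1)) ω ∂Γ = 0 := by
        have h := hmart.setIntegral_eq t.le_succ MeasurableSet.univ
        rw [setIntegral_univ, setIntegral_univ] at h
        rw [integral_sub' (hmart.integrable t) (hmart.integrable (t + 1)), h, sub_self]
      filter_upwards [(integral_eq_zero_iff_of_nonneg_ae hnn hint).1 hz] with ω hω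
      exact sub_eq_zero.1 hω
    refine measure_mono_null ?_ (ae_all_iff.2 heq)
    rintro ω ⟨t, ht, hne⟩ hω
    obtain ⟨s, rfl⟩ : ∃ s, t = s + 1 := ⟨t - 1, by omega⟩
    exact hne (hω s).symm

end SeqTest
end
end

section
/- Let K ⊆ ℝ^d be a Borel set with 0 < Leb(K), let p be a probability density on ℝ^d supported on K, and let γ_n be a sequence of finite mixtures of nondegenerate Gaussian densities with d_n := ∫_{ℝ^d}|p − γ_n| dx → 0 and d_n < 1 for all n. Then each K-truncation γ_n|_K (the density γ_n·1_K normalized to integrate to 1, which is a finite mixture of K-truncated Gaussian densities whenever ∫_K γ_n > 0) satisfies ∫_{ℝ^d} | p − γ_n|_K | dx ≤ 2 d_n/(1 − d_n); in particular, γ_n|_K → p in L¹. -/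
open MeasureTheory ProbabilityTheory Filter Finset Matrix
open scoped Classical

noncomputable section

namespace SeqTest

variable (d : ℕ)


open scoped MatrixOrder in
/-- A positive-definite quadratic form on `ℝ^d` dominates a positive multiple of `∑ i, y i ^ 2`. -/
lemma exists_pos_mul_sum_sq_le_of_posDef {A : Matrix (Fin d) (Fin d) ℝ} (hA : A.PosDef) :
    ∃ c : ℝ, 0 < c ∧ ∀ y : RV d, c * ∑ i, y i ^ 2 ≤ y ⬝ᵥ (A *ᵥ y) := by
  obtain ⟨B, hB⟩ := CStarAlgebra.nonneg_iff_eq_star_mul_self.mp hA.posSemidef.nonneg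
  rw [Matrix.star_eq_conjTranspose] at hB
  subst hB
  have hQ : ∀ y : RV d, y ⬝ᵥ ((Bᴴ * B) *ᵥ y) = ∑ i, (B *ᵥ y) i ^ 2 := by
    intro y
    rw [← Matrix.mulVec_mulVec, Matrix.dotProduct_mulVec,
      Matrix.conjTranspose_eq_transpose_of_trivial, Matrix.vecMul_transpose]
    simp [dotProduct, sq]
  have hinj : Function.Injective (Matrix.mulVecLin B) := by
    rw [injective_iff_map_eq_zero]
    intro y hy
    by_contra hne
    have hpos := hA.dotProduct_mulVec_pos hne
    rw [star_trivial, hQ] at hpos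
    rw [Matrix.mulVecLin_apply] at hy
    simp [hy] at hpos
  obtain ⟨L, -, hL⟩ := (Matrix.mulVecLin B).exists_antilipschitzWith (LinearMap.ker_eq_bot.mpr hinj)
  have hbound : ∀ (y : RV d) (i : Fin d), y i ^ 2 ≤ (L : ℝ) ^ 2 * ∑ j, (B *ᵥ y) j ^ 2 := by
    intro y i
    have hy : ‖y‖ ≤ L * ‖B *ᵥ y‖ := by
      simpa using hL.le_mul_dist y 0
    have hBy : ‖B *ᵥ y‖ ≤ √(∑ j, (B *ᵥ y) j ^ 2) := by
      refine (pi_norm_le_iff_of_nonneg (Real.sqrt_nonneg _)).mpr fun j => ?_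
      exact Real.abs_le_sqrt
        (Finset.single_le_sum (f := fun j => (B *ᵥ y) j ^ 2) (fun j _ => sq_nonneg _)
          (Finset.mem_univ j))
    have hyi : |y i| ≤ L * √(∑ j, (B *ᵥ y) j ^ 2) :=
      (norm_le_pi_norm y i).trans (hy.trans (by gcongr))
    calc y i ^ 2 = |y i| ^ 2 := (sq_abs _).symm
      _ ≤ (L * √(∑ j, (B *ᵥ y) j ^ 2)) ^ 2 := by gcongr
      _ = (L : ℝ) ^ 2 * ∑ j, (B *ᵥ y) j ^ 2 := by
        rw [mul_pow, Real.sq_sqrt (Finset.sum_nonneg fun j _ => sq_nonneg _)]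
  refine ⟨1 / (d * (L : ℝ) ^ 2 + 1), by positivity, fun y => ?_⟩
  have hsum : ∑ i, y i ^ 2 ≤ d * ((L : ℝ) ^ 2 * ∑ j, (B *ᵥ y) j ^ 2) := by
    simpa using Finset.sum_le_sum fun i (_ : i ∈ Finset.univ) => hbound y i
  have hnn : 0 ≤ ∑ j, (B *ᵥ y) j ^ 2 := Finset.sum_nonneg fun j _ => sq_nonneg _
  rw [hQ, one_div_mul_eq_div, div_le_iff₀ (by positivity)]
  linarith

/-- Nondegenerate Gaussian densities are integrable. -/
lemma integrable_gaussDensityFn (m : RV d) {S : Matrix (Fin d) (Fin d) ℝ} (hS : S.PosDef) :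
    Integrable (gaussDensityFn d m S) := by
  obtain ⟨c, hc, hcS⟩ := exists_pos_mul_sum_sq_le_of_posDef d hS.inv
  have hdom : Integrable fun y : RV d => ∏ i, Real.exp (-(c / 2) * y i ^ 2) :=
    Integrable.fintype_prod fun _ => integrable_exp_neg_mul_sq (by positivity)
  have hexp : Integrable fun y : RV d => Real.exp (-(1 / 2) * (y ⬝ᵥ (S⁻¹ *ᵥ y))) := by
    refine hdom.mono' (Continuous.aestronglyMeasurable (by fun_prop)) (ae_of_all _ fun y => ?_)
    rw [Real.norm_eq_abs, Real.abs_exp, ← Real.exp_sum, ← Finset.mul_sum]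
    exact Real.exp_le_exp.mpr (by linarith [hcS y])
  exact (hexp.comp_sub_right m).const_mul _

/-- Finite Gaussian mixture densities are integrable. -/
lemma IsGaussianMixture.integrable {g : RV d → ℝ} (hg : IsGaussianMixture d g) :
    Integrable g := by
  obtain ⟨k, α, ms, Ss, -, -, hS, rfl⟩ := hg
  exact integrable_finsetSum _ fun i _ => (integrable_gaussDensityFn d (ms i) (hS i)).const_mul _

/-- Finite Gaussian mixture densities are nonnegative. -/
lemma IsGaussianMixture.nonneg {g : RV d → ℝ} (hg : IsGaussianMixture d g) (x : RV d) :
    0 ≤ g x := by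
  obtain ⟨k, α, ms, Ss, hα, -, hS, rfl⟩ := hg
  refine Finset.sum_nonneg fun i _ => mul_nonneg (hα i) ?_
  have := (hS i).det_pos
  unfold gaussDensityFn
  positivity

/-- If a density `p` is supported on `K`, truncating a nonnegative integrable function `g` to `K`
and normalizing it at most doubles its `L¹` distance to `p`, as long as that distance is
less than `1`. -/
lemma integral_abs_sub_truncation_le {X : Type*} [MeasurableSpace X] {μ : Measure X} {K : Set X}
    (hK : MeasurableSet K) {p g : X → ℝ} (hp : Integrable p μ) (hp_int : ∫ x, p x ∂μ = 1)
    (hp_supp : ∀ᵐ x ∂μ, x ∉ K → p x = 0) (hg : Integrable g μ) (hg_nonneg : ∀ x, 0 ≤ g x)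
    (hlt : ∫ x, |p x - g x| ∂μ < 1) :
    ∫ x, |p x - K.indicator g x / (∫ y in K, g y ∂μ)| ∂μ ≤ 2 * ∫ x, |p x - g x| ∂μ := by
  set δ := ∫ x, |p x - g x| ∂μ
  set m := ∫ y in K, g y ∂μ with hm
  have hgK : Integrable (K.indicator g) μ := hg.indicator hK
  have hδK : ∫ x, |p x - K.indicator g x| ∂μ ≤ δ := by
    refine integral_mono_ae (hp.sub hgK).abs (hp.sub hg).abs ?_
    filter_upwards [hp_supp] with x hx
    by_cases hxK : x ∈ K <;> simp [hxK, hx]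
  have hmass : |1 - m| ≤ δ := by
    have : 1 - m = ∫ x, (p x - K.indicator g x) ∂μ := by
      rw [integral_sub hp hgK, hp_int, integral_indicator hK]
    rw [this]
    exact abs_integral_le_integral_abs.trans hδK
  have hmpos : 0 < m := by linarith [le_abs_self (1 - m)]
  have hnorm : ∫ x, K.indicator g x * |1 - 1 / m| ∂μ = |1 - m| := by
    rw [integral_mul_const, integral_indicator hK, ← hm]
    nth_rewrite 1 [← abs_of_pos hmpos]
    rw [← abs_mul, mul_sub, mul_one_div_cancel hmpos.ne', mul_one, abs_sub_comm]
  calc ∫ x, |p x - K.indicator g x / m| ∂μ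
      ≤ ∫ x, (|p x - K.indicator g x| + K.indicator g x * |1 - 1 / m|) ∂μ := by
        refine integral_mono (hp.sub (hgK.div_const m)).abs
          ((hp.sub hgK).abs.add (hgK.mul_const _)) fun x => ?_
        have hx : 0 ≤ K.indicator g x := Set.indicator_nonneg (fun x _ => hg_nonneg x) x
        have hsplit : p x - K.indicator g x / m =
            (p x - K.indicator g x) + K.indicator g x * (1 - 1 / m) := by ring
        dsimp only
        rw [hsplit]
        refine (abs_add_le _ _).trans_eq ?_
        rw [abs_mul, abs_of_nonneg hx]
    _ = ∫ x, |p x - K.indicator g x| ∂μ + |1 - m| := by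
        rw [← hnorm]
        exact integral_add (hp.sub hgK).abs (hgK.mul_const _)
    _ ≤ 2 * δ := by linarith

/-- Truncations to `K` of Gaussian mixtures approximating a density `p`
supported on `K` converge to `p` in `L¹`, with the quantitative bound `2dₙ/(1−dₙ)`. -/
theorem statement12 (K : Set (RV d)) (hK : MeasurableSet K)
    (hKpos : 0 < volume K)
    (p : RV d → ℝ) (hp_meas : Measurable p) (hp_nonneg : ∀ x, 0 ≤ p x)
    (hp_int : ∫ x, p x = 1)
    (hp_supp : ∀ᵐ x ∂(volume : Measure (RV d)), x ∉ K → p x = 0)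
    (γn : ℕ → RV d → ℝ) (hmix : ∀ n, IsGaussianMixture d (γn n))
    (hlt : ∀ n, ∫ x, |p x - γn n x| < 1)
    (htend : Tendsto (fun n => ∫ x, |p x - γn n x|) atTop (nhds 0)) :
    (∀ n, ∫ x, |p x - K.indicator (γn n) x / (∫ y in K, γn n y)| ≤
        2 * (∫ x, |p x - γn n x|) / (1 - ∫ x, |p x - γn n x|)) ∧
    Tendsto (fun n => ∫ x, |p x - K.indicator (γn n) x / (∫ y in K, γn n y)|)
      atTop (nhds 0) := by
  have hp : Integrable p := .of_integral_ne_zero (by simp [hp_int])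
  have hbound : ∀ n, ∫ x, |p x - K.indicator (γn n) x / (∫ y in K, γn n y)| ≤
      2 * ∫ x, |p x - γn n x| := fun n =>
    integral_abs_sub_truncation_le hK hp hp_int hp_supp ((hmix n).integrable d)
      ((hmix n).nonneg d) (hlt n)
  refine ⟨fun n => (hbound n).trans ?_, ?_⟩
  · have hnn : 0 ≤ ∫ x, |p x - γn n x| := integral_nonneg fun x => abs_nonneg _
    rw [le_div_iff₀ (by linarith [hlt n])]
    exact mul_le_of_le_one_right (by positivity) (by linarith)
  · refine squeeze_zero (fun n => integral_nonneg fun x => abs_nonneg _) hbound ?_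
    simpa using htend.const_mul 2

end SeqTest
end
end
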